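/- If $A\ge 1$ and $0\le x<1/A$, then $A\bigl(x+\ln(1-x)\bigr)\le \ln\bigl(1-Ax^2/2\bigr)$. -/

import Mathlib

open MeasureTheory ProbabilityTheory

/-- Lemma A: if `A ≥ 1` and `0 ≤ x < 1/A`, then `A(x + ln(1-x)) ≤ ln(1 - A x²/2)`. -/
theorem log_ineq_lemmaA (A x : ℝ) (hA : 1 ≤ A) (hx0 : 0 ≤ x) (hx1 : x < 1 / A) :
    A * (x + Real.log (1 - x)) ≤ Real.log (1 - A * x ^ 2 / 2) := by
  have hA0 : 0 < A := by linarith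
  have hAx : x * A < 1 := (lt_div_iff₀ hA0).1 hx1
  have key : ∀ y ∈ Set.Icc 0 x, 0 < 1 - y ∧ 1 - y ≤ 1 - A * y ^ 2 / 2 := by
    rintro y ⟨h0, h1⟩
    have h2 : y * A < 1 := lt_of_le_of_lt (mul_le_mul_of_nonneg_right h1 hA0.le) hAx
    constructor
    · nlinarith
    · nlinarith [mul_nonneg h0 (sub_nonneg.2 h2.le)]
  have hd : ∀ y ∈ Set.Icc 0 x, HasDerivAt
      (fun y => Real.log (1 - A * y ^ 2 / 2) - A * (y + Real.log (1 - y)))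
      (A * y * (1 / (1 - y) - 1 / (1 - A * y ^ 2 / 2))) y := by
    intro y hy
    obtain ⟨h1, h2⟩ := key y hy
    have h3 : 0 < 1 - A * y ^ 2 / 2 := by linarith
    have e1 : HasDerivAt (fun y : ℝ => 1 - A * y ^ 2 / 2) (-(A * y)) y := by
      have := ((((hasDerivAt_id y).pow 2).const_mul A).div_const 2).const_sub 1
      refine this.congr_deriv ?_
      simp only [id, Nat.cast_ofNat]
      ring
    have e2 : HasDerivAt (fun y : ℝ => 1 - y) (-1) y := (hasDerivAt_id y).const_sub 1
    have e := (e1.log h3.ne').sub (((hasDerivAt_id y).add (e2.log h1.ne')).const_mul A)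
    refine e.congr_deriv ?_
    generalize 1 - A * y ^ 2 / 2 = w at *
    have hy : y = 1 - (1 - y) := by ring
    generalize 1 - y = z at *
    subst hy
    field_simp
    ring
  have hm := monotoneOn_of_deriv_nonneg (convex_Icc 0 x)
    (fun y hy => (hd y hy).continuousAt.continuousWithinAt)
    (fun y hy => (hd y (interior_subset hy)).differentiableAt.differentiableWithinAt)
    (fun y hy => by
      have hy := interior_subset hy
      rw [(hd y hy).deriv]
      obtain ⟨h1, h2⟩ := key y hy
      exact mul_nonneg (mul_nonneg hA0.le hy.1)
        (sub_nonneg.2 (one_div_le_one_div_of_le h1 h2)))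
  have := hm (Set.left_mem_Icc.2 hx0) (Set.right_mem_Icc.2 hx0) hx0
  simp at this
  linarith
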